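/- For every positive integer m, the following identities of polynomials with rational coefficients hold: Q_m(x) = P_m(x) − P_{m−1}(x); x·P_{m−1}(x) = Q_m(x) − Q_{m−1}(x); 𝒬_m(x) = 𝒫_m(x) + 𝒬_{m−1}(x); x·𝒬_{m−1}(x) = 𝒫_m(x) − 𝒫_{m−1}(x); 𝒫_m(x) = (−1)^m · P_m(−4−x); and (2m+1)·𝒫_m(x) = P_m(x) + 2x·P_m′(x), where P_m′ denotes the formal derivative of P_m. -/

import Mathlib

open Polynomial Finset

/-- `P_m(x) = Σ_{k=0}^{m} ((2m+1)/(2k+1))·binom(m+k,2k)·x^k`. -/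
noncomputable def Ppoly (m : ℕ) : Polynomial ℚ :=
  ∑ k ∈ Finset.range (m + 1),
    Polynomial.C ((2 * m + 1 : ℚ) / (2 * k + 1) * (Nat.choose (m + k) (2 * k))) * Polynomial.X ^ k

/-- `Q_m(x) = 2 + Σ_{k=1}^{m} (m/k)·binom(m+k−1,2k−1)·x^k`. -/
noncomputable def Qpoly (m : ℕ) : Polynomial ℚ :=
  Polynomial.C 2 + ∑ k ∈ Finset.Icc 1 m,
    Polynomial.C ((m : ℚ) / k * (Nat.choose (m + k - 1) (2 * k - 1))) * Polynomial.X ^ k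

/-- `𝒫_m(x) = Σ_{k=0}^{m} binom(m+k,2k)·x^k`. -/
noncomputable def calP (m : ℕ) : Polynomial ℚ :=
  ∑ k ∈ Finset.range (m + 1),
    Polynomial.C ((Nat.choose (m + k) (2 * k) : ℚ)) * Polynomial.X ^ k

/-- `𝒬_m(x) = Σ_{k=0}^{m} binom(m+k+1,2k+1)·x^k`. -/
noncomputable def calQ (m : ℕ) : Polynomial ℚ :=
  ∑ k ∈ Finset.range (m + 1),
    Polynomial.C ((Nat.choose (m + k + 1) (2 * k + 1) : ℚ)) * Polynomial.X ^ k

/-!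
By absorption, `(j + 1) * choose (n + 1) (j + 1) = (n + 1) * choose n j`, the weighted binomial
coefficients of `P_m` and `Q_m` are linear combinations of those of `𝒫_m` and `𝒬_m`. So `P_m` and
`Q_m` lie in the `ℚ[X]`-span of `𝒫_m` and `𝒬_m`, whose recurrences are Pascal's rule; this settles
the first four identities. The same recurrences show inductively that `X ↦ -4 - X` fixes `𝒬_m` up
to the sign `(-1) ^ m` and, since `P_m = 2 𝒬_m - 𝒫_m`, exchanges `P_m` and `𝒫_m` up to that sign.
-/

section Coefficients

lemma coeff_sum_C_mul_X_pow {R : Type*} [Semiring R] {s : Finset ℕ} {f : ℕ → R} {k : ℕ}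
    (hf : k ∉ s → f k = 0) : (∑ i ∈ s, C (f i) * X ^ i).coeff k = f k := by
  simp only [finsetSum_coeff, coeff_C_mul_X_pow, Finset.sum_ite_eq]
  split_ifs with hk
  · rfl
  · exact (hf hk).symm

lemma coeff_X_mul_derivative {R : Type*} [CommSemiring R] (p : R[X]) (k : ℕ) :
    (X * derivative p).coeff k = k * p.coeff k := by
  cases k with
  | zero => simp
  | succ k => rw [coeff_X_mul, coeff_derivative, mul_comm, Nat.cast_succ]

variable (m k : ℕ)

lemma coeff_calP : (calP m).coeff k = (m + k).choose (2 * k) := by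
  refine coeff_sum_C_mul_X_pow fun hk ↦ ?_
  rw [Finset.mem_range] at hk
  rw [Nat.choose_eq_zero_of_lt (by lia), Nat.cast_zero]

lemma coeff_calQ : (calQ m).coeff k = (m + k + 1).choose (2 * k + 1) := by
  refine coeff_sum_C_mul_X_pow fun hk ↦ ?_
  rw [Finset.mem_range] at hk
  rw [Nat.choose_eq_zero_of_lt (by lia), Nat.cast_zero]

lemma coeff_Ppoly :
    (Ppoly m).coeff k = (2 * m + 1) / (2 * k + 1) * (m + k).choose (2 * k) := by
  refine coeff_sum_C_mul_X_pow fun hk ↦ ?_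
  rw [Finset.mem_range] at hk
  rw [Nat.choose_eq_zero_of_lt (by lia), Nat.cast_zero, mul_zero]

lemma coeff_zero_Qpoly : (Qpoly m).coeff 0 = 2 := by
  rw [Qpoly, coeff_add, coeff_C_zero, coeff_sum_C_mul_X_pow (by simp)]
  simp

lemma coeff_succ_Qpoly :
    (Qpoly m).coeff (k + 1) = m / (k + 1) * (m + k).choose (2 * k + 1) := by
  rw [Qpoly, coeff_add, coeff_C_succ, zero_add, coeff_sum_C_mul_X_pow]
  · simp [← add_assoc, mul_add]
  · intro hk
    rw [Finset.mem_Icc] at hk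
    rw [Nat.choose_eq_zero_of_lt (by lia), Nat.cast_zero, mul_zero]

end Coefficients

lemma calP_succ (n : ℕ) : calP (n + 1) = calP n + X * calQ n := by
  ext (_ | k)
  · simp [coeff_calP]
  · rw [coeff_add, coeff_X_mul, coeff_calP, coeff_calP, coeff_calQ, add_right_comm, mul_add_one,
      Nat.choose_succ_succ', Nat.cast_add, add_comm, add_assoc n k 1]

lemma calQ_succ (n : ℕ) : calQ (n + 1) = calP (n + 1) + calQ n := by
  ext k
  rw [coeff_add, coeff_calP, coeff_calQ, coeff_calQ, Nat.choose_succ_succ', Nat.cast_add,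
    add_right_comm n 1 k]

lemma Ppoly_eq_calQ_sub_calP (m : ℕ) : Ppoly m = 2 * calQ m - calP m := by
  ext k
  have absorption : ((m + k : ℚ) + 1) * (m + k).choose (2 * k) =
      (m + k + 1).choose (2 * k + 1) * (2 * k + 1) :=
    mod_cast Nat.add_one_mul_choose_eq (m + k) (2 * k)
  rw [coeff_sub, coeff_ofNat_mul, coeff_Ppoly, coeff_calP, coeff_calQ]
  field_simp
  linear_combination 2 * absorption

lemma Qpoly_eq_calP_sub_calQ (m : ℕ) : Qpoly m = 2 * calP m - X * (calQ m - calP m) := by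
  ext (_ | k)
  · simp [coeff_zero_Qpoly, coeff_calP]
  · have absorption : ((m + k : ℚ) + 1) * (m + k).choose (2 * k + 1) =
        (m + k + 1).choose (2 * k + 2) * (2 * k + 2) :=
      mod_cast Nat.add_one_mul_choose_eq (m + k) (2 * k + 1)
    rw [coeff_sub, coeff_ofNat_mul, coeff_X_mul, coeff_sub, coeff_succ_Qpoly, coeff_calP,
      coeff_calP, coeff_calQ, ← add_assoc, mul_add_one, Nat.choose_succ_succ' (m + k) (2 * k)]
    push_cast
    field_simp
    linear_combination absorption

lemma Ppoly_succ (n : ℕ) : Ppoly (n + 1) = Ppoly n + Qpoly (n + 1) := by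
  rw [Ppoly_eq_calQ_sub_calP, Ppoly_eq_calQ_sub_calP, Qpoly_eq_calP_sub_calQ]
  linear_combination (2 + X) * calQ_succ n - calP_succ n

lemma Qpoly_succ (n : ℕ) : Qpoly (n + 1) = Qpoly n + X * Ppoly n := by
  rw [Qpoly_eq_calP_sub_calQ, Qpoly_eq_calP_sub_calQ, Ppoly_eq_calQ_sub_calP]
  linear_combination 2 * calP_succ n - X * calQ_succ n

lemma calP_calQ_comp_neg_four_sub_X (m : ℕ) :
    (calP m).comp (-4 - X) = (-1) ^ m * Ppoly m ∧
      (calQ m).comp (-4 - X) = (-1) ^ m * calQ m := by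
  induction m with
  | zero => simp [calP, calQ, Ppoly]
  | succ n ih =>
    obtain ⟨ihP, ihQ⟩ := ih
    have calP_comp : (calP (n + 1)).comp (-4 - X) = (-1) ^ (n + 1) * Ppoly (n + 1) := by
      rw [calP_succ, add_comp, mul_comp, X_comp, ihP, ihQ, Ppoly_eq_calQ_sub_calP,
        Ppoly_eq_calQ_sub_calP, calQ_succ, calP_succ]
      ring
    refine ⟨calP_comp, ?_⟩
    rw [calQ_succ, add_comp, calP_comp, ihQ, Ppoly_eq_calQ_sub_calP, calQ_succ]
    ring

lemma Ppoly_comp_neg_four_sub_X (m : ℕ) : (Ppoly m).comp (-4 - X) = (-1) ^ m * calP m := by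
  obtain ⟨calP_comp, calQ_comp⟩ := calP_calQ_comp_neg_four_sub_X m
  rw [Ppoly_eq_calQ_sub_calP, sub_comp, mul_comp, ofNat_comp, calP_comp, calQ_comp,
    Ppoly_eq_calQ_sub_calP]
  ring

lemma smul_calP_eq_Ppoly_add_derivative (m : ℕ) :
    (2 * m + 1 : ℚ) • calP m = Ppoly m + 2 * X * derivative (Ppoly m) := by
  ext k
  rw [coeff_smul, smul_eq_mul, coeff_add, mul_assoc, coeff_ofNat_mul, coeff_X_mul_derivative,
    coeff_calP, coeff_Ppoly]
  field_simp
  ring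

theorem stmt_3 (m : ℕ) (hm : 0 < m) :
    Qpoly m = Ppoly m - Ppoly (m - 1) ∧
    Polynomial.X * Ppoly (m - 1) = Qpoly m - Qpoly (m - 1) ∧
    calQ m = calP m + calQ (m - 1) ∧
    Polynomial.X * calQ (m - 1) = calP m - calP (m - 1) ∧
    calP m = (-1) ^ m * (Ppoly m).comp (-4 - Polynomial.X) ∧
    (2 * m + 1 : ℚ) • calP m = Ppoly m + 2 * Polynomial.X * (Ppoly m).derivative := by
  obtain ⟨n, rfl⟩ := Nat.exists_eq_add_one.mpr hm
  rw [Nat.add_sub_cancel]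
  refine ⟨?_, ?_, calQ_succ n, ?_, ?_, smul_calP_eq_Ppoly_add_derivative (n + 1)⟩
  · exact eq_sub_of_add_eq' (Ppoly_succ n).symm
  · exact eq_sub_of_add_eq' (Qpoly_succ n).symm
  · exact eq_sub_of_add_eq' (calP_succ n).symm
  · rw [Ppoly_comp_neg_four_sub_X, ← mul_assoc,
      pow_mul_pow_eq_one (n + 1) (by norm_num), one_mul]
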